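/- Let Σ be an alphabet with N = |Σ| ≥ 2 letters, and let u, w ∈ Σ* with n = l(u) ≥ m = l(w). Set h = H(ū,w̄). Then the number of Hamming opposites v of u satisfying H(ū,w̄) + H(v̄,w̄) = l(w) is exactly (N − 1)^{n − h}. -/

import Mathlib

/-- The truncated Hamming function `H(ū,w̄)`: the Hamming distance between the
first `min (l u) (l w)` letters of `u` and of `w` (computed via `zip`, which
truncates to the common length).  For words of equal length it is the usual
Hamming distance. -/
def hamming {α : Type*} [DecidableEq α] (u v : List α) : ℕ :=
  (u.zip v).countP (fun p => decide (p.1 ≠ p.2))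

/-!
Let `v` be a Hamming opposite of `u`. At each position of `w` the letter of `w` differs from at
least one of the two distinct letters of `u` and `v`, so `l(w) ≤ H(ū,w̄) + H(v̄,w̄)`, with equality
iff at every position of `w` its letter is that of `u` or that of `v`. Equality is therefore a
letterwise condition on `v`: at each of the `h` positions where `u` and `w` disagree, the letter of
`v` has to be that of `w`, and at each of the remaining `n - h` positions it is any of the
`N - 1` letters other than that of `u`.
-/

section Words

open List

variable {A : Type*}

theorem encard_compl_singleton (a : A) : ({a}ᶜ : Set A).encard = ENat.card A - 1 := by
  rw [Set.compl_eq_univ_sdiff, Set.encard_sdiff_singleton_of_mem (Set.mem_univ a), Set.encard_univ]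

theorem encard_setOf_forall₂_mem (S : List (Set A)) :
    {v : List A | Forall₂ (· ∈ ·) v S}.encard = (S.map Set.encard).prod := by
  induction S with
  | nil => simp
  | cons s S ih =>
    have image_cons : {v : List A | Forall₂ (· ∈ ·) v (s :: S)} =
        (fun p : A × List A ↦ p.1 :: p.2) '' (s ×ˢ {v | Forall₂ (· ∈ ·) v S}) := by
      ext v
      simp [forall₂_cons_right_iff, eq_comm]
    have cons_injective : Function.Injective fun p : A × List A ↦ p.1 :: p.2 := by
      rintro ⟨a, u⟩ ⟨b, v⟩ h
      simpa using h
    rw [image_cons, cons_injective.encard_image, Set.encard_prod, ih, map_cons, prod_cons]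

variable [DecidableEq A]

section Hamming

@[simp]
theorem hamming_nil_left (w : List A) : hamming [] w = 0 := by
  simp [hamming]

@[simp]
theorem hamming_nil_right (u : List A) : hamming u [] = 0 := by
  simp [hamming]

theorem hamming_cons_cons (a b : A) (u w : List A) :
    hamming (a :: u) (b :: w) = hamming u w + if a = b then 0 else 1 := by
  by_cases h : a = b <;> simp [hamming, h]

theorem hamming_le_length_left (u w : List A) : hamming u w ≤ u.length :=
  countP_le_length.trans (by simp)

theorem forall₂_ne_iff_hamming_eq_length {u v : List A} :
    Forall₂ (· ≠ ·) u v ↔ v.length = u.length ∧ hamming u v = u.length := by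
  rw [forall₂_iff_zip, eq_comm]
  refine and_congr_right fun hlen ↦ ?_
  have length_zip_eq : (u.zip v).length = u.length := by simp [hlen]
  rw [hamming, ← length_zip_eq, countP_eq_length]
  simp

theorem length_le_hamming_add_hamming {u v w : List A} (huv : Forall₂ (· ≠ ·) u v)
    (hw : w.length ≤ u.length) : w.length ≤ hamming u w + hamming v w := by
  induction huv generalizing w with
  | nil => simpa using hw
  | @cons a c u v hac _ ih =>
    cases w with
    | nil => simp
    | cons b w =>
      have tail_bound : w.length ≤ hamming u w + hamming v w := ih (Nat.le_of_succ_le_succ hw)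
      have head_bound : 1 ≤ (if a = b then 0 else 1) + if c = b then 0 else 1 := by grind
      simp only [hamming_cons_cons, length_cons]
      omega

end Hamming

/-- The sets of letters allowed, position by position, in a Hamming opposite `v` of `u` with
`H(ū,w̄) + H(v̄,w̄) = l(w)`. Positions of `u` beyond the end of `w` are treated like those where
`u` and `w` agree. -/
def oppositeLetters : List A → List A → List (Set A)
  | [], _ => []
  | a :: u, [] => {a}ᶜ :: oppositeLetters u []
  | a :: u, b :: w => (if a = b then {a}ᶜ else {b}) :: oppositeLetters u w

theorem forall₂_mem_oppositeLetters_iff {u w : List A} (hw : w.length ≤ u.length) (v : List A) :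
    Forall₂ (· ∈ ·) v (oppositeLetters u w) ↔
      Forall₂ (· ≠ ·) u v ∧ hamming u w + hamming v w = w.length := by
  induction u, w using oppositeLetters.induct generalizing v with
  | case1 w =>
    obtain rfl : w = [] := by simpa using hw
    simp [oppositeLetters]
  | case2 a u ih =>
    cases v with
    | nil => simp [oppositeLetters]
    | cons c v => simp [oppositeLetters, ih, eq_comm]
  | case3 a u b w ih =>
    cases v with
    | nil => simp [oppositeLetters]
    | cons c v =>
      have hwu : w.length ≤ u.length := Nat.le_of_succ_le_succ hw
      simp only [oppositeLetters, forall₂_cons, ih hwu, hamming_cons_cons, length_cons]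
      by_cases hab : a = b
      · simp only [hab, if_true, Set.mem_compl_singleton_iff]
        grind
      · simp only [hab, if_false, Set.mem_singleton_iff]
        constructor
        · rintro ⟨rfl, huv, heq⟩
          exact ⟨⟨hab, huv⟩, by rw [if_pos rfl]; omega⟩
        · rintro ⟨⟨-, huv⟩, heq⟩
          have lower_bound := length_le_hamming_add_hamming huv hwu
          have hcb : c = b := by
            by_contra hcb
            rw [if_neg hcb] at heq
            omega
          rw [if_pos hcb] at heq
          exact ⟨hcb, huv, by omega⟩

theorem prod_encard_oppositeLetters (u w : List A) :
    ((oppositeLetters u w).map Set.encard).prod =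
      (ENat.card A - 1) ^ (u.length - hamming u w) := by
  induction u, w using oppositeLetters.induct with
  | case1 w => simp [oppositeLetters]
  | case2 a u ih =>
    rw [hamming_nil_right, Nat.sub_zero] at ih ⊢
    rw [oppositeLetters, map_cons, prod_cons, ih, encard_compl_singleton, length_cons, pow_succ']
  | case3 a u b w ih =>
    rw [oppositeLetters, map_cons, prod_cons, ih, hamming_cons_cons, length_cons]
    by_cases hab : a = b
    · simp only [hab, if_true, add_zero, encard_compl_singleton]
      rw [Nat.succ_sub (hamming_le_length_left u w), pow_succ']
    · simp only [hab, if_false, Set.encard_singleton, one_mul, Nat.add_sub_add_right]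

theorem stmt_15_general {u w : List A} (hw : w.length ≤ u.length) :
    {v : List A | v.length = u.length ∧ hamming u v = u.length ∧
        hamming u w + hamming v w = w.length}.encard =
      (ENat.card A - 1) ^ (u.length - hamming u w) := by
  simp only [← and_assoc, ← forall₂_ne_iff_hamming_eq_length,
    ← forall₂_mem_oppositeLetters_iff hw]
  rw [encard_setOf_forall₂_mem, prod_encard_oppositeLetters]

end Words

theorem stmt_15 {A : Type*} [DecidableEq A] [Fintype A]
    (N : ℕ) (hN : Fintype.card A = N) (hA : 2 ≤ N)
    (u w : List A) (n m h : ℕ)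
    (hn : u.length = n) (hm : w.length = m) (hmn : m ≤ n)
    (hh : hamming u w = h) :
    {v : List A | v.length = n ∧ hamming u v = n ∧
        hamming u w + hamming v w = w.length}.ncard = (N - 1) ^ (n - h) := by
  subst hN hn hm hh
  rw [Set.ncard, stmt_15_general hmn, ENat.card_eq_coe_fintype_card]
  norm_cast
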